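/- Let ν ∈ (0,1) and u₀ ∈ (0,π), and let g be the 2π-periodic extension of u ↦ |u|^{ν−1} sgn(u) from [−π,π). Then there exists a function F ∈ C^∞((−u₀,u₀)) such that for every u ∈ (−u₀,u₀) \ {0}, ℋ(g)(u) = tan(πν/2) · |u|^{ν−1} + F(u). -/

import Mathlib

open Real MeasureTheory Filter Set Asymptotics

/-- Principal value (at `u`) of the integral of `g` over `(-π, π)`. -/
noncomputable def pvInt (g : ℝ → ℝ) (u : ℝ) : ℝ :=
  limUnder (nhdsWithin (0:ℝ) (Set.Ioi 0))
    (fun ε : ℝ => ∫ x in {x : ℝ | x ∈ Set.Ioo (-π) π ∧ ε < |x - u|}, g x)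

/-- Periodic Hilbert transform of a `2π`-periodic function:
`ℋ(f)(u) = (1/π) Σ_{n ∈ ℤ} p.v.∫_{-π}^{π} f(x)/(x - u + 2πn) dx`. -/
noncomputable def periodicHilbert (f : ℝ → ℝ) (u : ℝ) : ℝ :=
  (1/π) * ∑' n : ℤ, pvInt (fun x => f x / (x - u + 2*π*(n : ℝ))) u

/-- The operator `K_∞ = -ℋ ∂ᵤ` acting via the a.e. derivative. -/
noncomputable def Kinf (f : ℝ → ℝ) (u : ℝ) : ℝ := - periodicHilbert (deriv f) u

/-- The `2π`-periodic extension of `g : [-π, π) → ℝ`. -/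
noncomputable def perExt (g : ℝ → ℝ) (x : ℝ) : ℝ :=
  g (x - 2*π*(⌊(x + π)/(2*π)⌋ : ℝ))

/-!
Let `g(x) = |x| ^ (ν - 1) sgn x` and `0 < |u| < π`. Subtracting the singularity, the principal value
of `∫ g(x) / (x - u) dx` over `(-π, π)` is
`∫ (g(x) - g(u)) / (x - u) dx + g(u) log ((π - u) / (π + u))`. Pairing `x` with `-x` turns the
integral into `∫ 2 (x ^ ν - |u| ^ ν) / (x ^ 2 - u ^ 2) dx` over `(0, π)`, which is the difference of
the integrals over `(0, ∞)` and over `(π, ∞)`. The first scales to a multiple of `|u| ^ (ν - 1)`,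
and `x ↦ 1 / x`, the geometric series and the partial fractions of the cotangent evaluate the
multiple as `π tan (π ν / 2)`. In the second, the part containing `|u| ^ ν` cancels the logarithm
and leaves `∫ 2 x ^ ν / (x ^ 2 - u ^ 2) dx` over `(π, ∞)`. This tail and the terms `n ≠ 0` of the
Hilbert transform are Cauchy integrals whose poles stay outside `|z| < π`, so together they extend
to a holomorphic function of `u` there.
-/

open scoped Topology

section ParametricIntegral

variable {α E : Type*} [MeasurableSpace α] {μ : Measure α} [NormedAddCommGroup E]
  [NormedSpace ℂ E] {U : Set ℂ} {F : ℂ → α → E} {bound : α → ℝ}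

lemma aestronglyMeasurable_deriv_of_differentiableOn {z₀ : ℂ} (hU : U ∈ 𝓝 z₀)
    (hF_meas : ∀ z ∈ U, AEStronglyMeasurable (F z) μ)
    (hF_diff : ∀ᵐ a ∂μ, DifferentiableAt ℂ (F · a) z₀) :
    AEStronglyMeasurable (fun a ↦ deriv (F · a) z₀) μ := by
  have hz₀ : z₀ ∈ U := mem_of_mem_nhds hU
  refine aestronglyMeasurable_of_tendsto_ae (𝓝[≠] z₀)
    (f := fun z a ↦ U.indicator (slope (F · a) z₀) z) (fun z ↦ ?_) ?_
  · by_cases hz : z ∈ U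
    · simp only [indicator_of_mem hz, slope_def_module]
      exact ((hF_meas z hz).sub (hF_meas z₀ hz₀)).const_smul (z - z₀)⁻¹
    · simpa only [indicator_of_notMem hz] using aestronglyMeasurable_const
  · filter_upwards [hF_diff] with a ha
    refine ha.hasDerivAt.tendsto_slope.congr' ?_
    filter_upwards [mem_nhdsWithin_of_mem_nhds hU] with z hz
    exact (indicator_of_mem hz _).symm

-- Cauchy's estimate turns the bound on `F` into one on its derivative.
lemma differentiableOn_integral_of_dominated (hU : IsOpen U)
    (hF_meas : ∀ z ∈ U, AEStronglyMeasurable (F z) μ)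
    (hF_diff : ∀ᵐ a ∂μ, DifferentiableOn ℂ (F · a) U)
    (h_bound : ∀ᵐ a ∂μ, ∀ z ∈ U, ‖F z a‖ ≤ bound a) (bound_integrable : Integrable bound μ) :
    DifferentiableOn ℂ (fun z ↦ ∫ a, F z a ∂μ) U := by
  intro z₀ hz₀
  obtain ⟨r, hr, hrU⟩ := Metric.isOpen_iff.mp hU z₀ hz₀
  have hsub : ∀ z ∈ Metric.ball z₀ (r / 2), Metric.closedBall z (r / 3) ⊆ U := fun z hz ↦
    (Metric.closedBall_subset_ball' (by linarith [Metric.mem_ball.mp hz])).trans hrU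
  have hz₀U : U ∈ 𝓝 z₀ := hU.mem_nhds hz₀
  have hderiv := hasDerivAt_integral_of_dominated_loc_of_deriv_le (μ := μ) (F := F)
    (F' := fun z a ↦ deriv (F · a) z) (bound := fun a ↦ bound a / (r / 3))
    (Metric.ball_mem_nhds z₀ (half_pos hr)) (eventually_of_mem hz₀U hF_meas)
    (bound_integrable.mono' (hF_meas z₀ hz₀) (h_bound.mono fun a ha ↦ ha z₀ hz₀))
    (aestronglyMeasurable_deriv_of_differentiableOn hz₀U hF_meas
      (hF_diff.mono fun a ha ↦ ha.differentiableAt hz₀U)) ?_ (bound_integrable.div_const _) ?_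
  · exact hderiv.2.differentiableAt.differentiableWithinAt
  · filter_upwards [hF_diff, h_bound] with a hdiff hbound z hz
    exact Complex.norm_deriv_le_of_forall_mem_sphere_norm_le (by positivity)
      (hdiff.diffContOnCl_ball (hsub z hz))
      fun w hw ↦ hbound w (hsub z hz (Metric.sphere_subset_closedBall hw))
  · filter_upwards [hF_diff] with a hdiff z hz
    have hzU : z ∈ U := hsub z hz (Metric.mem_closedBall_self (by positivity))
    exact (hdiff.differentiableAt (hU.mem_nhds hzU)).hasDerivAt

end ParametricIntegral

lemma integral_neg_self_eq_integral_add_comp_neg {E : Type*} [NormedAddCommGroup E]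
    [NormedSpace ℝ E] {f : ℝ → E} {a : ℝ} (hf : IntervalIntegrable f volume (-a) a) :
    ∫ x in -a..a, f x = ∫ x in 0..a, (f x + f (-x)) := by
  have h0 : (0 : ℝ) ∈ uIcc (-a) a := by
    rw [mem_uIcc]; grind
  have hneg : IntervalIntegrable f volume (-a) 0 :=
    hf.mono_set (uIcc_subset_uIcc_left h0)
  have hpos : IntervalIntegrable f volume 0 a := hf.mono_set (uIcc_subset_uIcc_right h0)
  have hcomp : IntervalIntegrable (fun x ↦ f (-x)) volume 0 a := by
    simpa using (IntervalIntegrable.comp_sub_left hneg 0).symm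
  rw [← intervalIntegral.integral_add_adjacent_intervals hneg hpos,
    intervalIntegral.integral_add hpos hcomp, intervalIntegral.integral_comp_neg, neg_zero,
    add_comm]

lemma integrable_sub_div_sub_of_differentiableAt {μ : Measure ℝ} [IsFiniteMeasure μ] {f : ℝ → ℝ}
    {u : ℝ} (hf : Integrable f μ) (hd : DifferentiableAt ℝ f u) :
    Integrable (fun x ↦ (f x - f u) / (x - u)) μ := by
  obtain ⟨C, hC⟩ := hd.isBigO_sub.bound
  obtain ⟨δ, hδ, hball⟩ := Metric.eventually_nhds_iff.mp hC
  have hfu : Integrable (fun x ↦ f x - f u) μ := hf.sub (integrable_const _)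
  refine ((integrable_const |C|).add (hfu.norm.div_const δ)).mono'
    (hfu.aestronglyMeasurable.aemeasurable.div (by fun_prop)).aestronglyMeasurable
    (Eventually.of_forall fun x ↦ ?_)
  simp only [Pi.add_apply, norm_div, Real.norm_eq_abs]
  rcases lt_or_ge |x - u| δ with hx | hx
  · have hle : |f x - f u| / |x - u| ≤ |C| :=
      div_le_of_le_mul₀ (abs_nonneg _) (abs_nonneg _)
        ((hball hx).trans (mul_le_mul_of_nonneg_right (le_abs_self C) (norm_nonneg _)))
    exact hle.trans (le_add_of_nonneg_right (by positivity))
  · exact (div_le_div_of_nonneg_left (abs_nonneg _) hδ hx).trans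
      (le_add_of_nonneg_left (abs_nonneg C))

/-- The Cauchy transform `z ↦ ∫ f(x) / (x - z) dx` over `s ∪ -s` of an odd function `f`, folded
onto `s ⊆ (0, ∞)` by pairing `x` with `-x`. The point `z` is complex so that smoothness in `z` comes
from holomorphy. -/
noncomputable def oddCauchyTransform (f : ℝ → ℝ) (s : Set ℝ) (z : ℂ) : ℂ :=
  ∫ x in s, ((2 * x * f x : ℝ) : ℂ) / ((x : ℂ) ^ 2 - z ^ 2)

section OddCauchyTransform

variable {f : ℝ → ℝ} {s : Set ℝ} {a r : ℝ}

lemma oddCauchyTransform_ofReal (f : ℝ → ℝ) (s : Set ℝ) (c : ℝ) :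
    oddCauchyTransform f s c = ((∫ x in s, 2 * x * f x / (x ^ 2 - c ^ 2) : ℝ) : ℂ) := by
  rw [oddCauchyTransform, ← integral_complex_ofReal]
  norm_cast

lemma differentiableOn_oddCauchyTransform {U : Set ℂ} {bound : ℝ → ℝ} (hs : MeasurableSet s)
    (hU : IsOpen U) (hf : AEStronglyMeasurable f (volume.restrict s))
    (hne : ∀ z ∈ U, ∀ x ∈ s, (x : ℂ) ^ 2 - z ^ 2 ≠ 0)
    (h_bound : ∀ z ∈ U, ∀ x ∈ s, |2 * x * f x| / ‖(x : ℂ) ^ 2 - z ^ 2‖ ≤ bound x)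
    (bound_integrable : IntegrableOn bound s) :
    DifferentiableOn ℂ (oddCauchyTransform f s) U := by
  refine differentiableOn_integral_of_dominated hU (fun z _ ↦ ?_) ?_ ?_ bound_integrable
  · have hf' := hf.aemeasurable
    exact AEMeasurable.aestronglyMeasurable (by fun_prop)
  · filter_upwards [ae_restrict_mem hs] with x hx
    exact (differentiableOn_const _).div (by fun_prop) fun z hz ↦ hne z hz x hx
  · filter_upwards [ae_restrict_mem hs] with x hx z hz
    rw [norm_div, Complex.norm_real]
    exact h_bound z hz x hx

lemma sq_norm_sub_sq_le_norm_sq_sub_sq {x : ℝ} {z : ℂ} (hx : |x| ≤ a) :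
    ‖z‖ ^ 2 - a ^ 2 ≤ ‖(x : ℂ) ^ 2 - z ^ 2‖ := by
  have h := norm_sub_norm_le (z ^ 2) ((x : ℂ) ^ 2)
  rw [norm_sub_rev, norm_pow, norm_pow, Complex.norm_real, Real.norm_eq_abs] at h
  have : |x| ^ 2 ≤ a ^ 2 := pow_le_pow_left₀ (abs_nonneg x) hx 2
  linarith

lemma sq_sub_sq_le_norm_sq_sub_sq {x : ℝ} {z : ℂ} (hz : ‖z‖ ≤ r) :
    x ^ 2 - r ^ 2 ≤ ‖(x : ℂ) ^ 2 - z ^ 2‖ := by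
  have h := norm_sub_norm_le ((x : ℂ) ^ 2) (z ^ 2)
  rw [norm_pow, norm_pow, Complex.norm_real, Real.norm_eq_abs, sq_abs] at h
  have : ‖z‖ ^ 2 ≤ r ^ 2 := pow_le_pow_left₀ (norm_nonneg z) hz 2
  linarith

lemma integrableOn_Ioc_mul_self (hf : IntegrableOn f (Ioc 0 a)) :
    IntegrableOn (fun x ↦ 2 * x * f x) (Ioc 0 a) := by
  refine hf.bdd_mul (c := 2 * a) (by fun_prop) ?_
  filter_upwards [ae_restrict_mem measurableSet_Ioc] with x hx
  rw [Real.norm_of_nonneg (by linarith [hx.1])]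
  linarith [hx.2]

lemma norm_oddCauchyTransform_Ioc_le {z : ℂ} {m : ℝ} (hf : IntegrableOn f (Ioc 0 a)) (hm : 0 < m)
    (hz : m ≤ ‖z‖ ^ 2 - a ^ 2) :
    ‖oddCauchyTransform f (Ioc 0 a) z‖ ≤ (∫ x in Ioc 0 a, |2 * x * f x|) / m := by
  rw [← integral_div]
  refine norm_integral_le_of_norm_le ((integrableOn_Ioc_mul_self hf).abs.div_const m) ?_
  filter_upwards [ae_restrict_mem measurableSet_Ioc] with x hx
  rw [norm_div, Complex.norm_real, Real.norm_eq_abs]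
  have hden := sq_norm_sub_sq_le_norm_sq_sub_sq (z := z)
    (abs_le.mpr ⟨by linarith [hx.1, hx.2], hx.2⟩)
  gcongr
  exact hz.trans hden

lemma differentiableOn_oddCauchyTransform_Ioc (ha : 0 ≤ a) (hf : IntegrableOn f (Ioc 0 a)) :
    DifferentiableOn ℂ (oddCauchyTransform f (Ioc 0 a)) {z | a < ‖z‖} := by
  intro z₀ (hz₀ : a < ‖z₀‖)
  obtain ⟨b, hab, hb⟩ := exists_between hz₀
  have hU : IsOpen {z : ℂ | b < ‖z‖} := isOpen_lt continuous_const continuous_norm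
  have hm : 0 < b ^ 2 - a ^ 2 := by nlinarith
  have hden : ∀ z ∈ {z : ℂ | b < ‖z‖}, ∀ x ∈ Ioc 0 a, b ^ 2 - a ^ 2 ≤ ‖(x : ℂ) ^ 2 - z ^ 2‖ := by
    intro z (hz : b < ‖z‖) x hx
    have hle := sq_norm_sub_sq_le_norm_sq_sub_sq (z := z) (abs_le.mpr ⟨by linarith [hx.1], hx.2⟩)
    have : b ^ 2 ≤ ‖z‖ ^ 2 := by gcongr; linarith
    linarith
  refine ((differentiableOn_oddCauchyTransform measurableSet_Ioc hU hf.aestronglyMeasurable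
    (fun z hz x hx ↦ norm_pos_iff.mp (hm.trans_le (hden z hz x hx))) (fun z hz x hx ↦ ?_)
    ((integrableOn_Ioc_mul_self hf).abs.div_const (b ^ 2 - a ^ 2))).differentiableAt
      (hU.mem_nhds hb)).differentiableWithinAt
  gcongr
  exact hden z hz x hx

lemma integrableOn_Ioi_mul_div_sq_sub_sq (hr : |r| < a)
    (hf : IntegrableOn (fun x ↦ f x / x) (Ioi a)) :
    IntegrableOn (fun x ↦ 2 * x * f x / (x ^ 2 - r ^ 2)) (Ioi a) := by
  have hra : r ^ 2 < a ^ 2 := sq_lt_sq' (abs_lt.mp hr).1 (abs_lt.mp hr).2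
  have ha : 0 < a := (abs_nonneg r).trans_lt hr
  have hquot : ∀ x ∈ Ioi a, ‖2 * x ^ 2 / (x ^ 2 - r ^ 2)‖ ≤ 2 * a ^ 2 / (a ^ 2 - r ^ 2) := by
    intro x (hx : a < x)
    have hax : a ^ 2 ≤ x ^ 2 := by gcongr
    rw [Real.norm_of_nonneg (div_nonneg (by positivity) (by linarith)),
      div_le_div_iff₀ (by linarith) (by linarith)]
    nlinarith [sq_nonneg r]
  refine (Integrable.bdd_mul hf (f := fun x ↦ 2 * x ^ 2 / (x ^ 2 - r ^ 2))
    (Measurable.aestronglyMeasurable (by fun_prop))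
    ((ae_restrict_mem measurableSet_Ioi).mono hquot)).congr ?_
  filter_upwards [ae_restrict_mem measurableSet_Ioi] with x (hx : a < x)
  field_simp [(ha.trans hx).ne']

lemma differentiableOn_oddCauchyTransform_Ioi (hf : IntegrableOn (fun x ↦ f x / x) (Ioi a)) :
    DifferentiableOn ℂ (oddCauchyTransform f (Ioi a)) (Metric.ball 0 a) := by
  intro z₀ hz₀
  obtain ⟨r, hzr, hra⟩ := exists_between (mem_ball_zero_iff.mp hz₀)
  have hr : 0 ≤ r := (norm_nonneg z₀).trans hzr.le
  have hpos : ∀ x ∈ Ioi a, 0 < x ^ 2 - r ^ 2 := fun x (hx : a < x) ↦ by nlinarith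
  have hden : ∀ z ∈ Metric.ball (0 : ℂ) r, ∀ x : ℝ, x ^ 2 - r ^ 2 ≤ ‖(x : ℂ) ^ 2 - z ^ 2‖ :=
    fun z hz x ↦ sq_sub_sq_le_norm_sq_sub_sq (mem_ball_zero_iff.mp hz).le
  have hf_meas : AEStronglyMeasurable f (volume.restrict (Ioi a)) := by
    refine (hf.aestronglyMeasurable.mul aestronglyMeasurable_id).congr ?_
    filter_upwards [ae_restrict_mem measurableSet_Ioi] with x (hx : a < x)
    exact div_mul_cancel₀ _ (hr.trans_lt (hra.trans hx)).ne'
  refine ((differentiableOn_oddCauchyTransform measurableSet_Ioi Metric.isOpen_ball hf_meas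
    (fun z hz x hx ↦ norm_pos_iff.mp ((hpos x hx).trans_le (hden z hz x))) (fun z hz x hx ↦ ?_)
    (integrableOn_Ioi_mul_div_sq_sub_sq (by rwa [abs_of_nonneg hr]) hf).abs).differentiableAt
      (Metric.isOpen_ball.mem_nhds (mem_ball_zero_iff.mpr hzr))).differentiableWithinAt
  rw [abs_div, abs_of_pos (hpos x hx)]
  have := hpos x hx
  gcongr
  exact hden z hz x

lemma intervalIntegrable_div_sub {c : ℝ} (ha : 0 ≤ a) (hf : IntervalIntegrable f volume (-a) a)
    (hc : a < |c|) : IntervalIntegrable (fun x ↦ f x / (x - c)) volume (-a) a := by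
  simp only [div_eq_mul_inv]
  refine hf.mul_continuousOn (ContinuousOn.inv₀ (by fun_prop) fun x hx h ↦ ?_)
  rw [uIcc_of_le (by linarith)] at hx
  exact (abs_le.mpr hx).not_gt (by rwa [sub_eq_zero.mp h])

lemma intervalIntegral_odd_div_sub {c : ℝ} (ha : 0 ≤ a) (hodd : Function.Odd f)
    (hf : IntervalIntegrable f volume (-a) a) (hc : a < |c|) :
    ∫ x in -a..a, f x / (x - c) = ∫ x in 0..a, 2 * x * f x / (x ^ 2 - c ^ 2) := by
  rw [integral_neg_self_eq_integral_add_comp_neg (intervalIntegrable_div_sub ha hf hc)]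
  refine intervalIntegral.integral_congr fun x hx ↦ ?_
  rw [uIcc_of_le ha] at hx
  have hxc : |x| < |c| := by rw [abs_of_nonneg hx.1]; exact hx.2.trans_lt hc
  have hsq : x ^ 2 - c ^ 2 ≠ 0 := sub_ne_zero.mpr (sq_lt_sq.mpr hxc).ne
  have hprod : (x - c) * (-x - c) ≠ 0 := by
    rwa [show (x - c) * (-x - c) = -(x ^ 2 - c ^ 2) by ring, neg_ne_zero]
  have hsub := left_ne_zero_of_mul hprod
  have hadd := right_ne_zero_of_mul hprod
  simp only [hodd x]
  field_simp
  ring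

end OddCauchyTransform

section PrincipalValue

variable {f g : ℝ → ℝ} {u l m : ℝ}

/-- The integral of `f` over `(-π, π)` exists as a principal value at `u` and equals `l`; this
is the convergence presupposed by the `limUnder` in `pvInt`. -/
def HasPVInt (f : ℝ → ℝ) (u l : ℝ) : Prop :=
  Tendsto (fun ε ↦ ∫ x in {x : ℝ | x ∈ Ioo (-π) π ∧ ε < |x - u|}, f x) (𝓝[>] 0) (𝓝 l)

lemma HasPVInt.pvInt_eq (h : HasPVInt f u l) : pvInt f u = l :=
  h.limUnder_eq

lemma measurableSet_lt_abs_sub (u ε : ℝ) : MeasurableSet {x : ℝ | ε < |x - u|} :=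
  (isOpen_lt continuous_const (by fun_prop)).measurableSet

lemma measurableSet_mem_Ioo_and_lt_abs_sub (a b u ε : ℝ) :
    MeasurableSet {x : ℝ | x ∈ Ioo a b ∧ ε < |x - u|} :=
  measurableSet_Ioo.inter (measurableSet_lt_abs_sub u ε)

lemma HasPVInt.congr (h : HasPVInt f u l) (hfg : EqOn f g (Ioo (-π) π)) : HasPVInt g u l :=
  Tendsto.congr (fun ε ↦ setIntegral_congr_fun (measurableSet_mem_Ioo_and_lt_abs_sub _ _ u ε)
    fun _ hx ↦ hfg hx.1) h

lemma HasPVInt.add (hf : HasPVInt f u l) (hg : HasPVInt g u m)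
    (hfi : ∀ ε > 0, IntegrableOn f {x : ℝ | x ∈ Ioo (-π) π ∧ ε < |x - u|})
    (hgi : ∀ ε > 0, IntegrableOn g {x : ℝ | x ∈ Ioo (-π) π ∧ ε < |x - u|}) :
    HasPVInt (fun x ↦ f x + g x) u (l + m) := by
  refine (Tendsto.add hf hg).congr' ?_
  filter_upwards [self_mem_nhdsWithin] with ε hε
  exact (integral_add (hfi ε hε) (hgi ε hε)).symm

lemma HasPVInt.const_mul (c : ℝ) (h : HasPVInt f u l) :
    HasPVInt (fun x ↦ c * f x) u (c * l) := by
  simpa only [HasPVInt, integral_const_mul] using Tendsto.const_mul c h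

lemma hasPVInt_of_intervalIntegrable (hf : IntervalIntegrable f volume (-π) π) :
    HasPVInt f u (∫ x in -π..π, f x) := by
  have hπ : -π ≤ π := by linarith [pi_pos]
  have hcover : AECover (volume.restrict (Ioo (-π) π)) (𝓝[>] 0) fun ε ↦ {x : ℝ | ε < |x - u|} :=
    { measurableSet := measurableSet_lt_abs_sub u
      ae_eventually_mem := by
        filter_upwards [Measure.ae_ne _ u] with x hx
        exact mem_nhdsWithin_of_mem_nhds (eventually_lt_nhds (abs_pos.mpr (sub_ne_zero.mpr hx))) }
  have hlim := hcover.integral_tendsto_of_countably_generated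
    ((intervalIntegrable_iff_integrableOn_Ioo_of_le hπ).mp hf)
  rw [intervalIntegral.integral_of_le hπ, integral_Ioc_eq_integral_Ioo]
  refine hlim.congr fun ε ↦ ?_
  rw [Measure.restrict_restrict (measurableSet_lt_abs_sub u ε), inter_comm]
  rfl

lemma integrableOn_inv_sub_lt_abs_sub (a b u : ℝ) {ε : ℝ} (hε : 0 < ε) :
    IntegrableOn (fun x ↦ (x - u)⁻¹) {x : ℝ | x ∈ Ioo a b ∧ ε < |x - u|} := by
  refine Measure.integrableOn_of_bounded (M := ε⁻¹)
    (measure_ne_top_of_subset (fun x hx ↦ hx.1) measure_Ioo_lt_top.ne) (by fun_prop) ?_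
  filter_upwards [ae_restrict_mem (measurableSet_mem_Ioo_and_lt_abs_sub a b u ε)] with x hx
  rw [norm_inv, Real.norm_eq_abs]
  exact inv_anti₀ hε hx.2.le

lemma setOf_mem_Ioo_and_lt_abs_sub {a b ε : ℝ} (ha : a < u - ε) (hb : u + ε < b) (hε : 0 < ε) :
    {x : ℝ | x ∈ Ioo a b ∧ ε < |x - u|} = Ioo a (u - ε) ∪ Ioo (u + ε) b := by
  ext x
  simp only [mem_ofPred_eq, mem_union, mem_Ioo, lt_abs]
  grind

lemma setIntegral_inv_sub_lt_abs_sub {a b ε : ℝ} (ha : a < u - ε) (hb : u + ε < b) (hε : 0 < ε) :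
    ∫ x in {x : ℝ | x ∈ Ioo a b ∧ ε < |x - u|}, (x - u)⁻¹ = log ((b - u) / (u - a)) := by
  have hint := integrableOn_inv_sub_lt_abs_sub a b u hε
  have hset := setOf_mem_Ioo_and_lt_abs_sub ha hb hε
  rw [hset] at hint ⊢
  have hdisj : Disjoint (Ioo a (u - ε)) (Ioo (u + ε) b) :=
    disjoint_left.mpr fun x hx hx' ↦ by linarith [hx.2, hx'.1]
  have hleft : ∫ x in a..u - ε, (x - u)⁻¹ = log (ε / (u - a)) := by
    rw [intervalIntegral.integral_comp_sub_right (fun x ↦ x⁻¹),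
      integral_inv_of_neg (by linarith) (by linarith), ← neg_div_neg_eq]
    congr 2 <;> ring
  have hright : ∫ x in u + ε..b, (x - u)⁻¹ = log ((b - u) / ε) := by
    rw [intervalIntegral.integral_comp_sub_right (fun x ↦ x⁻¹), add_sub_cancel_left,
      integral_inv_of_pos hε (by linarith)]
  rw [setIntegral_union hdisj measurableSet_Ioo hint.left_of_union hint.right_of_union,
    ← integral_Ioc_eq_integral_Ioo, ← integral_Ioc_eq_integral_Ioo,
    ← intervalIntegral.integral_of_le ha.le, ← intervalIntegral.integral_of_le hb.le,
    hleft, hright, ← log_mul (div_pos hε (by linarith)).ne' (div_pos (by linarith) hε).ne',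
    mul_comm, div_mul_div_cancel₀ hε.ne']

lemma hasPVInt_inv_sub (hu : u ∈ Ioo (-π) π) :
    HasPVInt (fun x ↦ (x - u)⁻¹) u (log ((π - u) / (π + u))) := by
  refine tendsto_const_nhds.congr' ?_
  filter_upwards [Ioo_mem_nhdsGT (lt_min (show 0 < u + π by linarith [hu.1]) (sub_pos.mpr hu.2))]
    with ε ⟨hε, hlt⟩
  rw [setIntegral_inv_sub_lt_abs_sub (by linarith [hlt.trans_le (min_le_left _ _)])
    (by linarith [hlt.trans_le (min_le_right _ _)]) hε, sub_neg_eq_add, add_comm u]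

lemma hasPVInt_div_sub (hf : IntervalIntegrable f volume (-π) π) (hd : DifferentiableAt ℝ f u)
    (hu : u ∈ Ioo (-π) π) :
    HasPVInt (fun x ↦ f x / (x - u)) u
      ((∫ x in -π..π, (f x - f u) / (x - u)) + f u * log ((π - u) / (π + u))) := by
  have hπ : -π ≤ π := by linarith [pi_pos]
  have hslope : IntervalIntegrable (fun x ↦ (f x - f u) / (x - u)) volume (-π) π :=
    (intervalIntegrable_iff_integrableOn_Ioc_of_le hπ).mpr
      (integrable_sub_div_sub_of_differentiableAt hf.1 hd)
  refine ((hasPVInt_of_intervalIntegrable hslope).add ((hasPVInt_inv_sub hu).const_mul (f u))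
    (fun ε _ ↦ ((intervalIntegrable_iff_integrableOn_Ioo_of_le hπ).mp hslope).mono_set
      fun x hx ↦ hx.1)
    (fun ε hε ↦ (integrableOn_inv_sub_lt_abs_sub _ _ u hε).const_mul (f u))).congr
    fun x _ ↦ ?_
  ring

end PrincipalValue

lemma perExt_eq_self (f : ℝ → ℝ) {x : ℝ} (hx : x ∈ Ico (-π) π) : perExt f x = f x := by
  have hfloor : ⌊(x + π) / (2 * π)⌋ = 0 := by
    rw [Int.floor_eq_zero_iff, mem_Ico, div_lt_one two_pi_pos]
    exact ⟨div_nonneg (by linarith [hx.1]) two_pi_pos.le, by linarith [hx.2]⟩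
  simp [perExt, hfloor]

/-- The contribution to `π ℋ(f)(z)` of the translate by `2πn` of the period cell `(-π, π)`, for
`f` odd. The singular translate `n = 0` is left out by setting its term to `0`. -/
noncomputable def imageCauchyTransform (f : ℝ → ℝ) (n : ℤ) (z : ℂ) : ℂ :=
  if n = 0 then 0 else oddCauchyTransform f (Ioc 0 π) (z - 2 * π * n)

section ImageCauchyTransform

variable {f : ℝ → ℝ} {r u l : ℝ} {n : ℤ} {z : ℂ}

lemma le_norm_sub_two_pi_mul_int (n : ℤ) (z : ℂ) : 2 * π * |(n : ℝ)| - ‖z‖ ≤ ‖z - 2 * π * n‖ := by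
  have h := norm_sub_norm_le (2 * π * n : ℂ) z
  rwa [norm_sub_rev, show ‖(2 * π * n : ℂ)‖ = 2 * π * |(n : ℝ)| by simp [abs_of_pos pi_pos]] at h

lemma mul_sq_le_sq_norm_sub_two_pi_mul_int (hn : n ≠ 0) (hr : r ≤ π) (hz : ‖z‖ ≤ r) :
    (π - r) * π * (n : ℝ) ^ 2 ≤ ‖z - 2 * π * n‖ ^ 2 - π ^ 2 := by
  have hn1 : (1 : ℝ) ≤ |(n : ℝ)| := by exact_mod_cast Int.one_le_abs hn
  have hle := le_norm_sub_two_pi_mul_int n z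
  have hlow : (π - r) * |(n : ℝ)| ≤ ‖z - 2 * π * n‖ - π := by nlinarith [pi_pos, norm_nonneg z]
  have hhigh : π * |(n : ℝ)| ≤ ‖z - 2 * π * n‖ + π := by nlinarith [pi_pos]
  have := mul_le_mul hlow hhigh (by positivity)
    ((mul_nonneg (sub_nonneg.mpr hr) (abs_nonneg _)).trans hlow)
  rw [← sq_abs (n : ℝ)]
  linarith

lemma differentiableOn_imageCauchyTransform (hf : IntegrableOn f (Ioc 0 π)) (n : ℤ) :
    DifferentiableOn ℂ (imageCauchyTransform f n) (Metric.ball 0 π) := by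
  unfold imageCauchyTransform
  by_cases hn : n = 0
  · simpa only [if_pos hn] using differentiableOn_const 0
  simp only [if_neg hn]
  refine (differentiableOn_oddCauchyTransform_Ioc pi_pos.le hf).comp (by fun_prop) fun z hz ↦ ?_
  have hn1 : (1 : ℝ) ≤ |(n : ℝ)| := by exact_mod_cast Int.one_le_abs hn
  have := mem_ball_zero_iff.mp hz
  exact lt_of_lt_of_le (by nlinarith [pi_pos]) (le_norm_sub_two_pi_mul_int n z)

lemma norm_imageCauchyTransform_le (hf : IntegrableOn f (Ioc 0 π)) (hr : r < π) (hz : ‖z‖ ≤ r)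
    (n : ℤ) : ‖imageCauchyTransform f n z‖ ≤
      (∫ x in Ioc 0 π, |2 * x * f x|) / ((π - r) * π) * (1 / (n : ℝ) ^ 2) := by
  by_cases hn : n = 0
  · simp [imageCauchyTransform, hn]
  have hm : 0 < (π - r) * π * (n : ℝ) ^ 2 := by
    have : 0 < π - r := sub_pos.mpr hr
    positivity
  rw [imageCauchyTransform, if_neg hn, div_mul_div_comm, mul_one]
  exact norm_oddCauchyTransform_Ioc_le hf hm (mul_sq_le_sq_norm_sub_two_pi_mul_int hn hr.le hz)

lemma summable_imageCauchyTransform (hf : IntegrableOn f (Ioc 0 π)) (hz : ‖z‖ < π) :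
    Summable fun n ↦ imageCauchyTransform f n z :=
  .of_norm_bounded ((Real.summable_one_div_int_pow.mpr one_lt_two).mul_left _)
    (norm_imageCauchyTransform_le hf hz le_rfl)

lemma differentiableOn_tsum_imageCauchyTransform (hf : IntegrableOn f (Ioc 0 π)) :
    DifferentiableOn ℂ (fun z ↦ ∑' n, imageCauchyTransform f n z) (Metric.ball 0 π) := by
  intro z hz
  obtain ⟨r, hzr, hr⟩ := exists_between (mem_ball_zero_iff.mp hz)
  have hdiff := Complex.differentiableOn_tsum_of_summable_norm
    ((Real.summable_one_div_int_pow.mpr one_lt_two).mul_left _)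
    (fun n ↦ (differentiableOn_imageCauchyTransform hf n).mono (Metric.ball_subset_ball hr.le))
    Metric.isOpen_ball
    (fun n w hw ↦ norm_imageCauchyTransform_le hf hr (mem_ball_zero_iff.mp hw).le n)
  exact (hdiff.differentiableAt (Metric.isOpen_ball.mem_nhds
    (mem_ball_zero_iff.mpr hzr))).differentiableWithinAt

lemma hasPVInt_div_sub_add_two_pi_mul_int (hodd : Function.Odd f)
    (hf : IntervalIntegrable f volume (-π) π) (hu : |u| < π) (hn : n ≠ 0) :
    HasPVInt (fun x ↦ f x / (x - u + 2 * π * n)) u (imageCauchyTransform f n u).re := by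
  have hn1 : (1 : ℝ) ≤ |(n : ℝ)| := by exact_mod_cast Int.one_le_abs hn
  have hc : π < |u - 2 * π * n| := by
    have := le_norm_sub_two_pi_mul_int n (u : ℂ)
    rw [← Complex.ofReal_ofNat, ← Complex.ofReal_intCast, ← Complex.ofReal_mul,
      ← Complex.ofReal_mul, ← Complex.ofReal_sub, Complex.norm_real, Complex.norm_real,
      Real.norm_eq_abs, Real.norm_eq_abs] at this
    nlinarith [pi_pos]
  have hpv := hasPVInt_of_intervalIntegrable (u := u) (intervalIntegrable_div_sub pi_pos.le hf hc)
  rw [intervalIntegral_odd_div_sub pi_pos.le hodd hf hc,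
    intervalIntegral.integral_of_le pi_pos.le] at hpv
  convert hpv using 1
  · funext x
    rw [sub_sub_eq_add_sub, add_sub_right_comm]
  · rw [imageCauchyTransform, if_neg hn, ← Complex.ofReal_re (∫ _ in _, _),
      ← oddCauchyTransform_ofReal]
    push_cast
    rfl

lemma periodicHilbert_perExt_of_odd (hodd : Function.Odd f)
    (hf : IntervalIntegrable f volume (-π) π) (hu : |u| < π)
    (hl : HasPVInt (fun x ↦ f x / (x - u)) u l) :
    periodicHilbert (perExt f) u = 1 / π * (l + (∑' n, imageCauchyTransform f n (u : ℂ)).re) := by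
  have hterm (n : ℤ) : pvInt (fun x ↦ perExt f x / (x - u + 2 * π * n)) u =
      (if n = 0 then l else 0) + (imageCauchyTransform f n u).re := by
    have hper {m : ℝ} (hm : HasPVInt (fun x ↦ f x / (x - u + 2 * π * n)) u m) :
        HasPVInt (fun x ↦ perExt f x / (x - u + 2 * π * n)) u m :=
      hm.congr fun x hx ↦ by simp only [perExt_eq_self f (Ioo_subset_Ico_self hx)]
    by_cases hn : n = 0
    · refine (hper ?_).pvInt_eq
      simpa [hn, imageCauchyTransform] using hl
    · rw [if_neg hn, zero_add]
      exact (hper (hasPVInt_div_sub_add_two_pi_mul_int hodd hf hu hn)).pvInt_eq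
  have hpos : IntegrableOn f (Ioc 0 π) :=
    hf.1.mono_set (Ioc_subset_Ioc_left (neg_nonpos.mpr pi_pos.le))
  have hsum := Complex.hasSum_re
    (summable_imageCauchyTransform hpos (z := u) (by simpa using hu)).hasSum
  rw [periodicHilbert, tsum_congr hterm, ((hasSum_ite_eq 0 l).add hsum).tsum_eq]

end ImageCauchyTransform

section CotangentSeries

variable {x ν : ℝ}

lemma hasSum_cotTerm_pi_mul_cot (hx : x ∈ Ioo 0 1) :
    HasSum (fun n : ℕ ↦ 1 / (x - (n + 1)) + 1 / (x + (n + 1))) (π * cot (π * x) - 1 / x) := by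
  have hz : (x : ℂ) ∈ Complex.integerComplement := by
    rintro ⟨n, hn⟩
    have hnx : (n : ℝ) = x := by exact_mod_cast hn
    have h0 : 0 < n := by exact_mod_cast hnx ▸ hx.1
    have h1 : n < 1 := by exact_mod_cast hnx ▸ hx.2
    lia
  have hsum := (summable_cotTerm hz).hasSum
  rw [← cot_series_rep' hz] at hsum
  rw [← Complex.hasSum_ofReal]
  convert hsum using 1
  · funext n
    simp only [cotTerm]
    push_cast
    rfl
  · push_cast
    rfl

lemma hasSum_one_div_add_sub_one_div_add_one (hx : 0 < x) :
    HasSum (fun n : ℕ ↦ 1 / (n + x) - 1 / (n + 1 + x)) (1 / x) := by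
  have hterm (n : ℕ) : 0 ≤ 1 / (n + x) - 1 / (n + 1 + x) :=
    sub_nonneg.mpr (one_div_le_one_div_of_le (by positivity) (by linarith))
  rw [hasSum_iff_tendsto_nat_of_nonneg hterm]
  have hpartial (N : ℕ) :
      ∑ n ∈ Finset.range N, (1 / (n + x) - 1 / (n + 1 + x)) = 1 / x - 1 / (N + x) := by
    simpa using Finset.sum_range_sub' (fun n : ℕ ↦ 1 / (n + x)) N
  simp only [hpartial]
  have hlim : Tendsto (fun N : ℕ ↦ 1 / (N + x)) atTop (𝓝 0) := by
    simpa only [one_div] using!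
      (tendsto_natCast_atTop_atTop.atTop_add tendsto_const_nhds).inv_tendsto_atTop
  simpa using hlim.const_sub (1 / x)

lemma hasSum_one_div_add_sub_one_div_add_one_sub (hx : x ∈ Ioo 0 1) :
    HasSum (fun n : ℕ ↦ 1 / (n + x) - 1 / (n + 1 - x)) (π * cot (π * x)) := by
  have hsum := (hasSum_cotTerm_pi_mul_cot hx).add (hasSum_one_div_add_sub_one_div_add_one hx.1)
  rw [sub_add_cancel] at hsum
  refine hsum.congr_fun fun n ↦ ?_
  rw [← neg_sub (n + 1 : ℝ) x, one_div_neg_eq_neg_one_div]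
  ring

lemma hasSum_pi_mul_tan (hν : ν ∈ Ioo (-1) 1) :
    HasSum (fun k : ℕ ↦ 2 * (1 / (2 * k + 1 - ν) - 1 / (2 * k + 1 + ν)))
      (π * tan (π * ν / 2)) := by
  have hcot : cot (π * ((1 - ν) / 2)) = tan (π * ν / 2) := by
    rw [show π * ((1 - ν) / 2) = π / 2 - π * ν / 2 by ring, cot_eq_cos_div_sin,
      tan_eq_sin_div_cos, cos_pi_div_two_sub, sin_pi_div_two_sub]
  have hsum := hasSum_one_div_add_sub_one_div_add_one_sub (x := (1 - ν) / 2)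
    ⟨by linarith [hν.2], by linarith [hν.1]⟩
  rw [hcot] at hsum
  refine hsum.congr_fun fun k ↦ ?_
  rw [show (k + (1 - ν) / 2 : ℝ) = (2 * k + 1 - ν) / 2 by ring,
    show (k + 1 - (1 - ν) / 2 : ℝ) = (2 * k + 1 + ν) / 2 by ring, one_div_div, one_div_div]
  ring

end CotangentSeries

section RpowIntegrals

variable {ν a r : ℝ}

lemma setIntegral_Ioi_one_eq_setIntegral_Ioo_comp_inv {E : Type*} [NormedAddCommGroup E]
    [NormedSpace ℝ E] (f : ℝ → E) :
    ∫ x in Ioi 1, f x = ∫ x in Ioo 0 1, (x ^ 2)⁻¹ • f x⁻¹ := by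
  have hderiv : ∀ x ∈ Ioo (0 : ℝ) 1, HasDerivWithinAt Inv.inv (-(x ^ 2)⁻¹) (Ioo 0 1) x :=
    fun x hx ↦ (hasDerivAt_inv hx.1.ne').hasDerivWithinAt
  have h := integral_image_eq_integral_abs_deriv_smul measurableSet_Ioo hderiv
    inv_injective.injOn f
  rw [image_inv_eq_inv, inv_Ioo_0_left one_pos, inv_one] at h
  simpa only [abs_neg, abs_inv, abs_pow, sq_abs] using h

lemma hasSum_rpow_two_mul_sub_sub_rpow_two_mul_add (ν : ℝ) {x : ℝ} (hx : x ∈ Ioo 0 1) :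
    HasSum (fun k : ℕ ↦ 2 * (x ^ (2 * k - ν) - x ^ (2 * k + ν)))
      (2 * (x ^ (-ν) - x ^ ν) / (1 - x ^ 2)) := by
  have hgeom := (hasSum_geometric_of_lt_one (sq_nonneg x) (by nlinarith [hx.1, hx.2])).mul_left
    (2 * (x ^ (-ν) - x ^ ν))
  rw [← div_eq_mul_inv] at hgeom
  refine hgeom.congr_fun fun k ↦ ?_
  have hpow : x ^ (2 * (k : ℝ)) = (x ^ 2) ^ k := by
    rw [← pow_mul, ← rpow_natCast]
    push_cast
    rfl
  rw [sub_eq_add_neg (2 * (k : ℝ)), rpow_add hx.1, rpow_add hx.1, hpow]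
  ring

lemma setIntegral_Ioo_zero_one_rpow {p : ℝ} (hp : -1 < p) :
    ∫ x in Ioo (0 : ℝ) 1, x ^ p = 1 / (p + 1) := by
  rw [← integral_Ioc_eq_integral_Ioo, ← intervalIntegral.integral_of_le zero_le_one,
    integral_rpow (.inl hp), one_rpow, zero_rpow (by linarith), sub_zero]

lemma setIntegral_Ioo_rpow_neg_sub_rpow (hν₀ : 0 ≤ ν) (hν₁ : ν < 1) :
    ∫ x in Ioo 0 1, 2 * (x ^ (-ν) - x ^ ν) / (1 - x ^ 2) = π * tan (π * ν / 2) := by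
  have hminus (k : ℕ) : -1 < 2 * k - ν := by linarith [k.cast_nonneg (α := ℝ)]
  have hplus (k : ℕ) : -1 < 2 * k + ν := by linarith [k.cast_nonneg (α := ℝ)]
  have hrpow {p : ℝ} (hp : -1 < p) : IntegrableOn (fun x : ℝ ↦ x ^ p) (Ioo 0 1) :=
    (intervalIntegral.integrableOn_Ioo_rpow_iff one_pos).mpr hp
  have hval (k : ℕ) : ∫ x in Ioo (0 : ℝ) 1, 2 * (x ^ (2 * k - ν) - x ^ (2 * k + ν)) =
      2 * (1 / (2 * k + 1 - ν) - 1 / (2 * k + 1 + ν)) := by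
    rw [integral_const_mul, integral_sub (hrpow (hminus k)) (hrpow (hplus k)),
      setIntegral_Ioo_zero_one_rpow (hminus k), setIntegral_Ioo_zero_one_rpow (hplus k),
      sub_add_eq_add_sub, add_right_comm]
  have hnorm (k : ℕ) : ∫ x in Ioo (0 : ℝ) 1, ‖2 * (x ^ (2 * k - ν) - x ^ (2 * k + ν))‖ =
      2 * (1 / (2 * k + 1 - ν) - 1 / (2 * k + 1 + ν)) := by
    rw [← hval]
    refine setIntegral_congr_fun measurableSet_Ioo fun x hx ↦ Real.norm_of_nonneg ?_
    have := rpow_le_rpow_of_exponent_ge hx.1 hx.2.le (show 2 * k - ν ≤ 2 * k + ν by linarith)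
    linarith
  have htan := hasSum_pi_mul_tan ⟨by linarith, hν₁⟩
  have hsum := hasSum_integral_of_summable_integral_norm (μ := volume.restrict (Ioo 0 1))
    (fun k : ℕ ↦ ((hrpow (hminus k)).sub (hrpow (hplus k))).const_mul 2)
    (by simpa only [Pi.sub_apply, hnorm] using htan.summable)
  simp only [Pi.sub_apply, hval] at hsum
  rw [← hsum.unique htan]
  exact setIntegral_congr_fun measurableSet_Ioo fun x hx ↦
    (hasSum_rpow_two_mul_sub_sub_rpow_two_mul_add ν hx).tsum_eq.symm

lemma integrableOn_Ioc_rpow_sub_rpow_div_sq_sub_sq (hν : -1 < ν) (ha : 0 < a) (b : ℝ) :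
    IntegrableOn (fun x ↦ 2 * (x ^ ν - a ^ ν) / (x ^ 2 - a ^ 2)) (Ioc 0 b) := by
  have hrpow : IntegrableOn (fun x : ℝ ↦ x ^ ν) (Ioc 0 b) :=
    (intervalIntegral.intervalIntegrable_rpow' hν).1
  have hslope := integrable_sub_div_sub_of_differentiableAt hrpow
    (Real.differentiableAt_rpow_const_of_ne ν ha.ne')
  refine (hslope.bdd_mul (f := fun x ↦ 2 / (x + a)) (c := 2 / a)
    (Measurable.aestronglyMeasurable (by fun_prop)) ?_).congr (Eventually.of_forall fun x ↦ ?_)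
  · filter_upwards [ae_restrict_mem measurableSet_Ioc] with x hx
    have hx₀ := hx.1
    rw [Real.norm_of_nonneg (by positivity)]
    gcongr
    linarith
  · simp only [div_mul_div_comm, sq_sub_sq]

lemma integrableOn_Ioi_rpow_div_sq_sub_sq (hν : ν < 1) (hr : |r| < a) :
    IntegrableOn (fun x ↦ 2 * x ^ ν / (x ^ 2 - r ^ 2)) (Ioi a) := by
  have ha : 0 < a := (abs_nonneg r).trans_lt hr
  have hdecay : IntegrableOn (fun x : ℝ ↦ x ^ (ν - 1) / x) (Ioi a) :=
    (integrableOn_Ioi_rpow_of_lt (show ν - 2 < -1 by linarith) ha).congr_fun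
      (fun x (hx : a < x) ↦ by
        simp only [← rpow_sub_one (ha.trans hx).ne']
        ring_nf) measurableSet_Ioi
  refine (integrableOn_Ioi_mul_div_sq_sub_sq hr hdecay).congr_fun (fun x (hx : a < x) ↦ ?_)
    measurableSet_Ioi
  have hx₀ : x ≠ 0 := (ha.trans hx).ne'
  simp only [rpow_sub_one hx₀, mul_assoc, mul_div_cancel₀ _ hx₀]

lemma integrableOn_Ioi_const_div_sq_sub_sq (hr : |r| < a) (c : ℝ) :
    IntegrableOn (fun x ↦ c / (x ^ 2 - r ^ 2)) (Ioi a) := by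
  refine ((integrableOn_Ioi_rpow_div_sq_sub_sq (ν := 0) one_pos hr).const_mul (c / 2)).congr
    (Eventually.of_forall fun x ↦ ?_)
  simp only [rpow_zero]
  ring

lemma integrableOn_Ioi_rpow_sub_const_div_sq_sub_sq (hν : ν < 1) (hr : |r| < a) (c : ℝ) :
    IntegrableOn (fun x ↦ 2 * (x ^ ν - c) / (x ^ 2 - r ^ 2)) (Ioi a) := by
  simp only [mul_sub, sub_div]
  exact (integrableOn_Ioi_rpow_div_sq_sub_sq hν hr).sub
    (integrableOn_Ioi_const_div_sq_sub_sq hr (2 * c))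

lemma integrableOn_Ioi_zero_rpow_sub_rpow_div_sq_sub_sq (hν : ν ∈ Ioo (-1) 1) (ha : 0 < a) :
    IntegrableOn (fun x ↦ 2 * (x ^ ν - a ^ ν) / (x ^ 2 - a ^ 2)) (Ioi 0) := by
  rw [← Ioc_union_Ioi_eq_Ioi (by positivity : 0 ≤ 2 * a)]
  refine (integrableOn_Ioc_rpow_sub_rpow_div_sq_sub_sq hν.1 ha _).union
    (integrableOn_Ioi_rpow_sub_const_div_sq_sub_sq hν.2 ?_ _)
  rw [abs_of_pos ha]
  linarith

lemma integral_Ioi_rpow_sub_one_div_sq_sub_one (hν₀ : 0 ≤ ν) (hν₁ : ν < 1) :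
    ∫ x in Ioi 0, 2 * (x ^ ν - 1) / (x ^ 2 - 1) = π * tan (π * ν / 2) := by
  have hint := integrableOn_Ioi_zero_rpow_sub_rpow_div_sq_sub_sq ⟨by linarith, hν₁⟩ one_pos
  have hneg := (integrableOn_Ioc_rpow_sub_rpow_div_sq_sub_sq (ν := -ν)
    (by linarith) one_pos 1).mono_set Ioo_subset_Ioc_self
  simp only [one_rpow, one_pow] at hint hneg
  have hinv : ∫ x in Ioi (1 : ℝ), 2 * (x ^ ν - 1) / (x ^ 2 - 1) =
      -∫ x in Ioo (0 : ℝ) 1, 2 * (x ^ (-ν) - 1) / (x ^ 2 - 1) := by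
    rw [setIntegral_Ioi_one_eq_setIntegral_Ioo_comp_inv, ← integral_neg]
    refine setIntegral_congr_fun measurableSet_Ioo fun x hx ↦ ?_
    have hsq : 1 - x ^ 2 ≠ 0 := by nlinarith [hx.1, hx.2]
    have hsq' : x ^ 2 - 1 ≠ 0 := by nlinarith [hx.1, hx.2]
    have hx₀ := hx.1.ne'
    simp only [inv_rpow hx.1.le, ← rpow_neg hx.1.le, smul_eq_mul]
    field_simp
    ring
  rw [← Ioc_union_Ioi_eq_Ioi zero_le_one, setIntegral_union (Ioc_disjoint_Ioi le_rfl)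
    measurableSet_Ioi (hint.mono_set Ioc_subset_Ioi_self)
    (hint.mono_set (Ioi_subset_Ioi zero_le_one)), hinv, integral_Ioc_eq_integral_Ioo,
    ← sub_eq_add_neg, ← integral_sub (hint.mono_set Ioo_subset_Ioi_self) hneg,
    ← setIntegral_Ioo_rpow_neg_sub_rpow hν₀ hν₁]
  refine setIntegral_congr_fun measurableSet_Ioo fun x _ ↦ ?_
  rw [← neg_sub (x ^ 2) 1, div_neg]
  ring

lemma integral_Ioi_rpow_sub_rpow_div_sq_sub_sq (hν₀ : 0 ≤ ν) (hν₁ : ν < 1) (ha : 0 < a) :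
    ∫ x in Ioi 0, 2 * (x ^ ν - a ^ ν) / (x ^ 2 - a ^ 2) =
      π * tan (π * ν / 2) * a ^ (ν - 1) := by
  have hscale := integral_comp_mul_left_Ioi' (fun x ↦ 2 * (x ^ ν - a ^ ν) / (x ^ 2 - a ^ 2)) 0 ha
  rw [mul_zero] at hscale
  rw [← hscale, ← integral_Ioi_rpow_sub_one_div_sq_sub_one hν₀ hν₁, smul_eq_mul,
    ← integral_const_mul, ← integral_mul_const]
  refine setIntegral_congr_fun measurableSet_Ioi fun x (hx : 0 < x) ↦ ?_
  have ha₀ := ha.ne'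
  simp only [mul_rpow ha.le hx.le, mul_pow, rpow_sub_one ha₀]
  rw [show a ^ ν * x ^ ν - a ^ ν = a ^ ν * (x ^ ν - 1) by ring,
    show a ^ 2 * x ^ 2 - a ^ 2 = a ^ 2 * (x ^ 2 - 1) by ring]
  field_simp

lemma integral_Ioi_div_sq_sub_sq (hr : |r| < a) :
    ∫ x in Ioi a, 2 * r / (x ^ 2 - r ^ 2) = -log ((a - r) / (a + r)) := by
  have hsub {x : ℝ} (hx : a ≤ x) : 0 < x - r := by linarith [(abs_lt.mp hr).2]
  have hadd {x : ℝ} (hx : a ≤ x) : 0 < x + r := by linarith [(abs_lt.mp hr).1]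
  have hderiv : ∀ x ∈ Ici a,
      HasDerivAt (fun x ↦ log ((x - r) / (x + r))) (2 * r / (x ^ 2 - r ^ 2)) x := by
    intro x hx
    have hs := (hsub hx).ne'
    have ha := (hadd hx).ne'
    refine ((((hasDerivAt_id x).sub_const r).div ((hasDerivAt_id x).add_const r) ha).log
      (div_ne_zero hs ha)).congr_deriv ?_
    rw [sq_sub_sq]
    simp only [id, Pi.div_apply]
    field_simp
    ring
  have hlim : Tendsto (fun x ↦ log ((x - r) / (x + r))) atTop (𝓝 0) := by
    have h : Tendsto (fun x ↦ 1 - 2 * r / (x + r)) atTop (𝓝 1) := by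
      simpa using
        ((tendsto_atTop_add_const_right _ r tendsto_id).const_div_atTop (2 * r)).const_sub 1
    rw [← log_one]
    refine (h.congr' ?_).log one_ne_zero
    filter_upwards [eventually_ge_atTop a] with x hx
    rw [one_sub_div (hadd hx).ne']
    ring
  rw [integral_Ioi_of_hasDerivAt_of_tendsto' hderiv
    (integrableOn_Ioi_const_div_sq_sub_sq hr _) hlim, zero_sub]

lemma integral_Ioi_rpow_sub_mul_div_sq_sub_sq (hν : ν < 1) (hr : |r| < a) (c : ℝ) :
    ∫ x in Ioi a, 2 * (x ^ ν - r * c) / (x ^ 2 - r ^ 2) =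
      (∫ x in Ioi a, 2 * x ^ ν / (x ^ 2 - r ^ 2)) + c * log ((a - r) / (a + r)) := by
  have hsplit (x : ℝ) : 2 * (x ^ ν - r * c) / (x ^ 2 - r ^ 2) =
      2 * x ^ ν / (x ^ 2 - r ^ 2) - c * (2 * r / (x ^ 2 - r ^ 2)) := by ring
  simp only [hsplit]
  rw [integral_sub (integrableOn_Ioi_rpow_div_sq_sub_sq hν hr)
    ((integrableOn_Ioi_const_div_sq_sub_sq hr _).const_mul c), integral_const_mul,
    integral_Ioi_div_sq_sub_sq hr, mul_neg, sub_neg_eq_add]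

end RpowIntegrals

lemma intervalIntegral_odd_sub_div_sub {f : ℝ → ℝ} {a u : ℝ} (ha : 0 ≤ a)
    (hodd : Function.Odd f) (hf : IntervalIntegrable f volume (-a) a)
    (hd : DifferentiableAt ℝ f u) :
    ∫ x in -a..a, (f x - f u) / (x - u) =
      ∫ x in 0..a, 2 * (x * f x - u * f u) / (x ^ 2 - u ^ 2) := by
  have hslope : IntervalIntegrable (fun x ↦ (f x - f u) / (x - u)) volume (-a) a :=
    (intervalIntegrable_iff_integrableOn_Ioc_of_le (by linarith)).mpr
      (integrable_sub_div_sub_of_differentiableAt hf.1 hd)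
  rw [integral_neg_self_eq_integral_add_comp_neg hslope]
  refine intervalIntegral.integral_congr_ae ?_
  filter_upwards [Measure.ae_ne volume u, Measure.ae_ne volume (-u)] with x hx hx' _
  have hsub : x - u ≠ 0 := sub_ne_zero.mpr hx
  have hadd : x + u ≠ 0 := by rwa [← sub_neg_eq_add, sub_ne_zero]
  rw [hodd x, sq_sub_sq, ← neg_add' x u, div_neg]
  field_simp
  ring

/-- The odd power `x ↦ |x| ^ p sgn x`. For `p = ν - 1` its `2π`-periodic extension from `[-π, π)` is
the function whose Hilbert transform is computed. -/
noncomputable def oddRpow (p x : ℝ) : ℝ := |x| ^ p * Real.sign x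

section OddRpow

variable {p ν u x : ℝ}

lemma odd_oddRpow (p : ℝ) : Function.Odd (oddRpow p) := fun x ↦ by
  rw [oddRpow, oddRpow, abs_neg, Real.sign_neg, mul_neg]

lemma oddRpow_of_pos (p : ℝ) (hx : 0 < x) : oddRpow p x = x ^ p := by
  rw [oddRpow, abs_of_pos hx, Real.sign_of_pos hx, mul_one]

lemma mul_oddRpow_sub_one (hx : x ≠ 0) (ν : ℝ) : x * oddRpow (ν - 1) x = |x| ^ ν := by
  have hsign : x * Real.sign x = |x| := by
    rcases hx.lt_or_gt with h | h
    · rw [Real.sign_of_neg h, abs_of_neg h, mul_neg_one]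
    · rw [Real.sign_of_pos h, abs_of_pos h, mul_one]
  have hx' : |x| ≠ 0 := abs_ne_zero.mpr hx
  rw [oddRpow, mul_left_comm, hsign, rpow_sub_one hx', div_mul_cancel₀ _ hx']

lemma intervalIntegrable_oddRpow (hp : -1 < p) (a b : ℝ) :
    IntervalIntegrable (oddRpow p) volume a b := by
  refine intervalIntegrable_of_odd (fun x ↦ (odd_oddRpow p x).symm) fun c hc ↦
    (intervalIntegral.intervalIntegrable_rpow' hp).congr fun x hx ↦ ?_
  rw [uIoc_of_le hc.le] at hx
  exact (oddRpow_of_pos p hx.1).symm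

lemma differentiableAt_oddRpow (p : ℝ) (hx : x ≠ 0) : DifferentiableAt ℝ (oddRpow p) x := by
  have hsign : Real.sign =ᶠ[𝓝 x] fun _ ↦ Real.sign x := by
    rcases hx.lt_or_gt with h | h
    · filter_upwards [eventually_lt_nhds h] with y hy
      rw [Real.sign_of_neg hy, Real.sign_of_neg h]
    · filter_upwards [eventually_gt_nhds h] with y hy
      rw [Real.sign_of_pos hy, Real.sign_of_pos h]
  exact ((differentiableAt_abs hx).rpow_const (.inl (abs_ne_zero.mpr hx))).mul
    ((differentiableAt_const _).congr_of_eventuallyEq hsign)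

lemma integrableOn_Ioi_oddRpow_div_self {a : ℝ} (hp : p < 0) (ha : 0 < a) :
    IntegrableOn (fun x ↦ oddRpow p x / x) (Ioi a) :=
  (integrableOn_Ioi_rpow_of_lt (show p - 1 < -1 by linarith) ha).congr_fun
    (fun x (hx : a < x) ↦ by
      simp only [oddRpow_of_pos p (ha.trans hx), rpow_sub_one (ha.trans hx).ne'])
    measurableSet_Ioi

lemma oddCauchyTransform_oddRpow_Ioi {a : ℝ} (ha : 0 ≤ a) (ν u : ℝ) :
    oddCauchyTransform (oddRpow (ν - 1)) (Ioi a) u =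
      ((∫ x in Ioi a, 2 * x ^ ν / (x ^ 2 - u ^ 2) : ℝ) : ℂ) := by
  rw [oddCauchyTransform_ofReal]
  congr 1
  refine setIntegral_congr_fun measurableSet_Ioi fun x hx ↦ ?_
  have hx₀ : 0 < x := ha.trans_lt hx
  rw [mul_assoc, mul_oddRpow_sub_one hx₀.ne', abs_of_pos hx₀]

lemma intervalIntegral_oddRpow_sub_div_sub {a : ℝ} (hν : 0 < ν) (ha : 0 ≤ a) (hu : u ≠ 0) :
    ∫ x in -a..a, (oddRpow (ν - 1) x - oddRpow (ν - 1) u) / (x - u) =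
      ∫ x in Ioc 0 a, 2 * (x ^ ν - |u| ^ ν) / (x ^ 2 - u ^ 2) := by
  rw [intervalIntegral_odd_sub_div_sub ha (odd_oddRpow _)
    (intervalIntegrable_oddRpow (by linarith) _ _) (differentiableAt_oddRpow _ hu),
    intervalIntegral.integral_of_le ha]
  refine setIntegral_congr_fun measurableSet_Ioc fun x hx ↦ ?_
  rw [mul_oddRpow_sub_one hx.1.ne', mul_oddRpow_sub_one hu, abs_of_pos hx.1]

lemma hasPVInt_oddRpow_div_sub (hν : ν ∈ Ioo 0 1) (hu : |u| < π) (hu₀ : u ≠ 0) :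
    HasPVInt (fun x ↦ oddRpow (ν - 1) x / (x - u)) u
      (π * tan (π * ν / 2) * |u| ^ (ν - 1) - ∫ x in Ioi π, 2 * x ^ ν / (x ^ 2 - u ^ 2)) := by
  have hu_pos : 0 < |u| := abs_pos.mpr hu₀
  have hall := integrableOn_Ioi_zero_rpow_sub_rpow_div_sq_sub_sq (ν := ν)
    ⟨by linarith [hν.1], hν.2⟩ hu_pos
  have hval := integral_Ioi_rpow_sub_rpow_div_sq_sub_sq hν.1.le hν.2 hu_pos
  simp only [sq_abs] at hall hval
  have htail := integral_Ioi_rpow_sub_mul_div_sq_sub_sq hν.2 hu (oddRpow (ν - 1) u)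
  rw [mul_oddRpow_sub_one hu₀] at htail
  have hpv := hasPVInt_div_sub (intervalIntegrable_oddRpow (p := ν - 1) (by linarith [hν.1]) _ _)
    (differentiableAt_oddRpow _ hu₀) (abs_lt.mp hu)
  rw [intervalIntegral_oddRpow_sub_div_sub hν.1 pi_pos.le hu₀] at hpv
  convert hpv using 1
  rw [← hval, ← Ioc_union_Ioi_eq_Ioi pi_pos.le, setIntegral_union (Ioc_disjoint_Ioi le_rfl)
    measurableSet_Ioi (hall.mono_set Ioc_subset_Ioi_self)
    (hall.mono_set (Ioi_subset_Ioi pi_pos.le)), htail]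
  ring

end OddRpow

theorem hilbert_abs_rpow_sgn_general (ν : ℝ) (hν : ν ∈ Ioo (0 : ℝ) 1) :
    ∃ F : ℝ → ℝ, AnalyticOnNhd ℝ F (Ioo (-π) π) ∧
      ∀ u ∈ Ioo (-π) π, u ≠ 0 →
        periodicHilbert (perExt (fun x ↦ |x| ^ (ν - 1) * Real.sign x)) u =
          tan (π * ν / 2) * |u| ^ (ν - 1) + F u := by
  have hint : IntervalIntegrable (oddRpow (ν - 1)) volume (-π) π :=
    intervalIntegrable_oddRpow (by linarith [hν.1]) _ _
  set Φ : ℂ → ℂ := fun z ↦ (∑' n, imageCauchyTransform (oddRpow (ν - 1)) n z) -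
    oddCauchyTransform (oddRpow (ν - 1)) (Ioi π) z with hΦ
  have hΦ_diff : DifferentiableOn ℂ Φ (Metric.ball 0 π) :=
    (differentiableOn_tsum_imageCauchyTransform
      (hint.1.mono_set (Ioc_subset_Ioc_left (neg_nonpos.mpr pi_pos.le)))).sub
    (differentiableOn_oddCauchyTransform_Ioi
      (integrableOn_Ioi_oddRpow_div_self (by linarith [hν.2]) pi_pos))
  refine ⟨fun u ↦ 1 / π * (Φ u).re, ?_, fun u hu hu₀ ↦ ?_⟩
  · refine analyticOnNhd_const.mul
      (((hΦ_diff.analyticOnNhd Metric.isOpen_ball).mono ?_).re_ofReal)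
    rintro _ ⟨u, hu, rfl⟩
    simpa [abs_lt] using hu
  · have hpv := hasPVInt_oddRpow_div_sub hν (abs_lt.mpr hu) hu₀
    refine (periodicHilbert_perExt_of_odd (odd_oddRpow _) hint (abs_lt.mpr hu) hpv).trans ?_
    simp only [hΦ, Complex.sub_re, oddCauchyTransform_oddRpow_Ioi pi_pos.le, Complex.ofReal_re]
    field_simp
    ring

/-- Lemma 2: for `ν ∈ (0,1)`, `u₀ ∈ (0,π)`, the periodic Hilbert transform of the
`2π`-periodic extension of `|u|^(ν-1) sgn(u)` equals `tan(πν/2) |u|^(ν-1)` plus a function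
that is `C^∞` on `(-u₀, u₀)`. -/
theorem hilbert_abs_rpow_sgn (ν u₀ : ℝ) (hν : ν ∈ Set.Ioo (0:ℝ) 1)
    (hu₀ : u₀ ∈ Set.Ioo (0:ℝ) π) :
    ∃ F : ℝ → ℝ, ContDiffOn ℝ (⊤ : ℕ∞) F (Set.Ioo (-u₀) u₀) ∧
      ∀ u ∈ Set.Ioo (-u₀) u₀, u ≠ 0 →
        periodicHilbert (perExt (fun x => |x| ^ (ν - 1) * Real.sign x)) u =
          Real.tan (π * ν / 2) * |u| ^ (ν - 1) + F u := by
  obtain ⟨F, hF_analytic, hF⟩ := hilbert_abs_rpow_sgn_general ν hν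
  have hsub : Ioo (-u₀) u₀ ⊆ Ioo (-π) π := Ioo_subset_Ioo (neg_le_neg hu₀.2.le) hu₀.2.le
  exact ⟨F, (hF_analytic.mono hsub).contDiffOn (uniqueDiffOn_Ioo _ _), fun u hu ↦ hF u (hsub hu)⟩
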